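/- arXiv:1909.08835 — 3 statements merged into one kernel-verified Lean document; each statement's English description precedes it below -/
import Mathlib

section
/- Let {φ_i}_{i∈I} and {ψ_i}_{i∈I} be two frames for a separable Hilbert space H. Then the following are equivalent: (i) the two frames are woven (there exist universal constants 0 < A ≤ B such that every weaving {φ_i}_{i∈J} ∪ {ψ_i}_{i∈J^c}, J ⊆ I, is a frame with bounds A and B); (ii) the two frames are weakly woven (for every J ⊆ I the weaving {φ_i}_{i∈J} ∪ {ψ_i}_{i∈J^c} is a frame for H, with bounds possibly depending on J). -/
/-!
Upper bounds pass to weavings, so the point is a common lower bound. Encode a weaving of finitely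
many families by the function `σ : ι → κ` choosing a family at each index; these functions form a
compact space.

For a fixed functional the energy of a weaving is continuous in `σ`, so the weavings with lower
bound `1 / (n + 1)` form a closed set. By Baire's theorem one of these sets contains a cylinder:
some `A > 0` is a lower bound for all weavings following a prescribed pattern on a finite set `F`.
Imposing that pattern on an arbitrary `σ` raises its energy by at most the sum `R` of all
coefficients over `F`, so on the unit sphere the energy is at least `A - R`.

Hence on the unit sphere the energy equals its maximum with `A - R`. That maximum is lower
semicontinuous in `σ` and, for the weak-* topology, in the functional, and it is positive on the
whole unit ball: away from `0` by assumption, at `0` because `R` vanishes there. By compactness it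
has a positive minimum.

In a Hilbert space the functionals are the inner products with vectors. An incomplete inner product
space is replaced by its completion, in which a family keeps its frame bounds.
-/

open scoped ComplexInnerProductSpace

noncomputable section

variable {H : Type*} [NormedAddCommGroup H] [InnerProductSpace ℂ H] [CompleteSpace H]
variable {I : Type*} [Countable I]

/-- `φ` is a Bessel sequence with Bessel bound `B`. -/
def IsBesselWith (φ : I → H) (B : ℝ) : Prop :=
  ∀ f : H, Summable (fun i => ‖⟪f, φ i⟫‖ ^ 2) ∧
    ∑' i, ‖⟪f, φ i⟫‖ ^ 2 ≤ B * ‖f‖ ^ 2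

/-- `φ` is a frame with frame bounds `A ≤ B`. -/
def IsFrameWith (φ : I → H) (A B : ℝ) : Prop :=
  0 < A ∧ A ≤ B ∧ ∀ f : H, Summable (fun i => ‖⟪f, φ i⟫‖ ^ 2) ∧
    A * ‖f‖ ^ 2 ≤ ∑' i, ‖⟪f, φ i⟫‖ ^ 2 ∧ ∑' i, ‖⟪f, φ i⟫‖ ^ 2 ≤ B * ‖f‖ ^ 2

/-- `φ` is a frame (for some choice of bounds). -/
def IsFrame (φ : I → H) : Prop := ∃ A B : ℝ, IsFrameWith φ A B

open Classical in
/-- The weaving of the families `φ` and `ψ` along the subset `J`: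
it takes `φ i` for `i ∈ J` and `ψ i` for `i ∈ Jᶜ`. -/
def weaving (φ ψ : I → H) (J : Set I) : I → H := fun i => if i ∈ J then φ i else ψ i

/-- Two families are woven if there are universal frame bounds valid for all weavings. -/
def Woven (φ ψ : I → H) : Prop :=
  ∃ A B : ℝ, ∀ J : Set I, IsFrameWith (weaving φ ψ J) A B

lemma lowerSemicontinuous_tsum_of_nonneg {α X : Type*} [TopologicalSpace X] {f : α → X → ℝ}
    (hf : ∀ a, LowerSemicontinuous (f a)) (hf₀ : ∀ a z, 0 ≤ f a z)
    (hs : ∀ z, Summable fun a => f a z) : LowerSemicontinuous fun z => ∑' a, f a z := by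
  intro z y hy
  obtain ⟨s, hys⟩ := ((hs z).hasSum.eventually_const_lt hy).exists
  filter_upwards [lowerSemicontinuous_sum (fun a _ => hf a) z y hys] with w hw
  exact hw.trans_le ((hs w).sum_le_tsum s fun a _ => hf₀ a w)

section WeavingEnergy

variable {𝕜 E ι κ : Type*} [RCLike 𝕜] [NormedAddCommGroup E] [NormedSpace 𝕜 E]

/-- The energy `∑ |l (x (σ i) i)| ^ p` of the functional `l` against a weaving of the families
`x k`, `k : κ`. The weaving is encoded by the function `σ` choosing the family used at each index.
For `p = 2` and `l = ⟪f, ·⟫` this is the sum in the frame inequality. -/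
def weavingEnergy (p : ℝ) (x : κ → ι → E) (σ : ι → κ) (l : StrongDual 𝕜 E) : ℝ :=
  ∑' i, ‖l (x (σ i) i)‖ ^ p

variable {p : ℝ} {x : κ → ι → E}

lemma weavingEnergy_nonneg (σ : ι → κ) (l : StrongDual 𝕜 E) : 0 ≤ weavingEnergy p x σ l :=
  tsum_nonneg fun _ => by positivity

lemma weavingEnergy_smul (σ : ι → κ) (c : 𝕜) (l : StrongDual 𝕜 E) :
    weavingEnergy p x σ (c • l) = ‖c‖ ^ p * weavingEnergy p x σ l := by
  simp only [weavingEnergy, smul_apply, norm_smul,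
    Real.mul_rpow (norm_nonneg _) (norm_nonneg _), tsum_mul_left]

lemma continuous_weavingEnergy_term [TopologicalSpace κ] [DiscreteTopology κ] (hp : 0 ≤ p)
    (i : ι) :
    Continuous fun z : (ι → κ) × WeakDual 𝕜 E => ‖z.2 (x (z.1 i) i)‖ ^ p := by
  have eval_choice : Continuous fun z : κ × WeakDual 𝕜 E => z.2 (x z.1 i) :=
    continuous_prod_of_discrete_left.2 fun k => WeakDual.eval_continuous (x k i)
  have choose_at_i : Continuous fun z : (ι → κ) × WeakDual 𝕜 E => (z.1 i, z.2) := by fun_prop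
  exact (eval_choice.comp choose_at_i).norm.rpow_const fun _ => Or.inr hp

lemma norm_rpow_le_sum [Fintype κ] (k : κ) (i : ι) (l : StrongDual 𝕜 E) :
    ‖l (x k i)‖ ^ p ≤ ∑ k, ‖l (x k i)‖ ^ p :=
  Finset.single_le_sum (f := fun k => ‖l (x k i)‖ ^ p) (fun _ _ => by positivity)
    (Finset.mem_univ k)

lemma summable_weavingEnergy_term [Finite κ] {l : StrongDual 𝕜 E}
    (hx : ∀ k, Summable fun i => ‖l (x k i)‖ ^ p) (σ : ι → κ) :
    Summable fun i => ‖l (x (σ i) i)‖ ^ p := by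
  cases nonempty_fintype κ
  exact (summable_sum fun k _ => hx k).of_nonneg_of_le (fun _ => by positivity)
    fun i => norm_rpow_le_sum (σ i) i l

lemma weavingEnergy_le_add_sum [Fintype κ] {l : StrongDual 𝕜 E}
    (hx : ∀ k, Summable fun i => ‖l (x k i)‖ ^ p) {F : Finset ι} {σ τ : ι → κ}
    (hστ : ∀ i ∉ F, τ i = σ i) :
    weavingEnergy p x τ l ≤ weavingEnergy p x σ l + ∑ i ∈ F, ∑ k, ‖l (x k i)‖ ^ p := by
  have off_F : ∑' i : ↥((F : Set ι)ᶜ), ‖l (x (τ i) i)‖ ^ p =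
      ∑' i : ↥((F : Set ι)ᶜ), ‖l (x (σ i) i)‖ ^ p :=
    tsum_congr fun i => by rw [hστ i i.2]
  have on_F : ∑ i ∈ F, ‖l (x (τ i) i)‖ ^ p ≤ ∑ i ∈ F, ∑ k, ‖l (x k i)‖ ^ p :=
    Finset.sum_le_sum fun i _ => norm_rpow_le_sum (τ i) i l
  have nonneg_on_F : 0 ≤ ∑ i ∈ F, ‖l (x (σ i) i)‖ ^ p :=
    Finset.sum_nonneg fun i _ => by positivity
  rw [weavingEnergy, weavingEnergy,
    ← (summable_weavingEnergy_term hx σ).sum_add_tsum_compl (s := F),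
    ← (summable_weavingEnergy_term hx τ).sum_add_tsum_compl (s := F), off_F]
  linarith

lemma continuous_weavingEnergy_left [Finite κ] [TopologicalSpace κ] [DiscreteTopology κ]
    (hp : 0 ≤ p) {l : StrongDual 𝕜 E}
    (hx : ∀ k, Summable fun i => ‖l (x k i)‖ ^ p) :
    Continuous fun σ : ι → κ => weavingEnergy p x σ l := by
  cases nonempty_fintype κ
  refine continuous_tsum (fun i => ?_) (summable_sum fun k (_ : k ∈ Finset.univ) => hx k)
    fun i σ => ?_
  · exact (continuous_weavingEnergy_term hp i).comp
      (continuous_id.prodMk (continuous_const (y := StrongDual.toWeakDual l)))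
  · rw [Real.norm_of_nonneg (by positivity)]
    exact norm_rpow_le_sum (σ i) i l

lemma lowerSemicontinuous_weavingEnergy [Finite κ] [TopologicalSpace κ] [DiscreteTopology κ]
    (hp : 0 ≤ p)
    (hx : ∀ (l : StrongDual 𝕜 E) k, Summable fun i => ‖l (x k i)‖ ^ p) :
    LowerSemicontinuous fun z : (ι → κ) × WeakDual 𝕜 E =>
      weavingEnergy p x z.1 (WeakDual.toStrongDual z.2) :=
  lowerSemicontinuous_tsum_of_nonneg
    (fun i => (continuous_weavingEnergy_term hp i).lowerSemicontinuous)
    (fun _ _ => by positivity) fun z => summable_weavingEnergy_term (hx _) z.1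

lemma exists_lower_bound_on_cylinder [Finite κ] [Nonempty κ] (hp : 0 ≤ p)
    (hx : ∀ (l : StrongDual 𝕜 E) k, Summable fun i => ‖l (x k i)‖ ^ p)
    (hlower : ∀ σ, ∃ A > 0, ∀ l : StrongDual 𝕜 E, A * ‖l‖ ^ p ≤ weavingEnergy p x σ l) :
    ∃ A > 0, ∃ (F : Finset ι) (σ₀ : ι → κ), ∀ σ, (∀ i ∈ F, σ i = σ₀ i) →
      ∀ l : StrongDual 𝕜 E, A * ‖l‖ ^ p ≤ weavingEnergy p x σ l := by
  let _ : TopologicalSpace κ := ⊥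
  have : DiscreteTopology κ := ⟨rfl⟩
  let S : ℕ → Set (ι → κ) := fun n =>
    {σ | ∀ l : StrongDual 𝕜 E, 1 / ((n : ℝ) + 1) * ‖l‖ ^ p ≤ weavingEnergy p x σ l}
  have isClosed_S (n : ℕ) : IsClosed (S n) := by
    simp only [S, Set.ofPred_forall]
    exact isClosed_iInter fun l =>
      isClosed_le continuous_const (continuous_weavingEnergy_left hp (hx l))
  have iUnion_S : ⋃ n, S n = Set.univ := by
    refine Set.eq_univ_of_forall fun σ => ?_
    obtain ⟨A, hA, hσ⟩ := hlower σ
    obtain ⟨n, hn⟩ := exists_nat_one_div_lt hA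
    exact Set.mem_iUnion.2 ⟨n, fun l => le_trans (by gcongr) (hσ l)⟩
  obtain ⟨n, σ₀, hσ₀⟩ := nonempty_interior_of_iUnion_of_closed isClosed_S iUnion_S
  obtain ⟨F, u, hu, hFu⟩ := isOpen_pi_iff.1 isOpen_interior σ₀ hσ₀
  refine ⟨1 / ((n : ℝ) + 1), by positivity, F, σ₀, fun σ hσ => ?_⟩
  refine interior_subset (hFu fun i hi => ?_)
  rw [hσ i hi]
  exact (hu i hi).2

lemma exists_le_weavingEnergy_add_sum [Fintype κ] [Nonempty κ] (hp : 0 ≤ p)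
    (hx : ∀ (l : StrongDual 𝕜 E) k, Summable fun i => ‖l (x k i)‖ ^ p)
    (hlower : ∀ σ, ∃ A > 0, ∀ l : StrongDual 𝕜 E, A * ‖l‖ ^ p ≤ weavingEnergy p x σ l) :
    ∃ A > 0, ∃ F : Finset ι, ∀ (σ : ι → κ) (l : StrongDual 𝕜 E),
      A * ‖l‖ ^ p ≤ weavingEnergy p x σ l + ∑ i ∈ F, ∑ k, ‖l (x k i)‖ ^ p := by
  classical
  obtain ⟨A, hA, F, σ₀, hF⟩ := exists_lower_bound_on_cylinder hp hx hlower
  refine ⟨A, hA, F, fun σ l => ?_⟩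
  calc A * ‖l‖ ^ p
      ≤ weavingEnergy p x (F.piecewise σ₀ σ) l :=
        hF _ (fun i hi => F.piecewise_eq_of_mem σ₀ σ hi) l
    _ ≤ weavingEnergy p x σ l + ∑ i ∈ F, ∑ k, ‖l (x k i)‖ ^ p :=
        weavingEnergy_le_add_sum (hx l) fun i hi => F.piecewise_eq_of_notMem σ₀ σ hi

lemma exists_pos_le_weavingEnergy_of_norm_eq_one [Fintype κ] [Nonempty κ] (hp : 0 < p)
    (hx : ∀ (l : StrongDual 𝕜 E) k, Summable fun i => ‖l (x k i)‖ ^ p)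
    (hpos : ∀ (σ : ι → κ) (l : StrongDual 𝕜 E), l ≠ 0 → 0 < weavingEnergy p x σ l)
    {A : ℝ} (hA : 0 < A) {F : Finset ι}
    (hF : ∀ (σ : ι → κ) (l : StrongDual 𝕜 E), ‖l‖ = 1 →
      A ≤ weavingEnergy p x σ l + ∑ i ∈ F, ∑ k, ‖l (x k i)‖ ^ p) :
    ∃ c > 0, ∀ (σ : ι → κ) (l : StrongDual 𝕜 E), ‖l‖ = 1 → c ≤ weavingEnergy p x σ l := by
  let _ : TopologicalSpace κ := ⊥
  have : DiscreteTopology κ := ⟨rfl⟩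
  let R : WeakDual 𝕜 E → ℝ := fun l => ∑ i ∈ F, ∑ k, ‖l (x k i)‖ ^ p
  let g : (ι → κ) × WeakDual 𝕜 E → ℝ := fun z =>
    weavingEnergy p x z.1 (WeakDual.toStrongDual z.2) ⊔ (A - R z.2)
  have continuous_R : Continuous R :=
    continuous_finsetSum _ fun i _ => continuous_finsetSum _ fun k _ =>
      (WeakDual.eval_continuous (x k i)).norm.rpow_const fun _ => Or.inr hp.le
  have lowerSemicontinuous_g : LowerSemicontinuous g :=
    (lowerSemicontinuous_weavingEnergy hp.le hx).sup
      (continuous_const.sub (continuous_R.comp continuous_snd)).lowerSemicontinuous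
  have g_pos (z : (ι → κ) × WeakDual 𝕜 E) : 0 < g z := by
    by_cases hz : WeakDual.toStrongDual z.2 = 0
    · have hR : R z.2 = 0 := by
        simp [R, ← WeakDual.toStrongDual_apply, hz, Real.zero_rpow hp.ne']
      exact lt_sup_of_lt_right (by rwa [hR, sub_zero])
    · exact lt_sup_of_lt_left (hpos z.1 _ hz)
  let K : Set ((ι → κ) × WeakDual 𝕜 E) :=
    Set.univ ×ˢ (WeakDual.toStrongDual ⁻¹' Metric.closedBall 0 1)
  have isCompact_K : IsCompact K := isCompact_univ.prod (WeakDual.isCompact_closedBall 0 1)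
  have nonempty_K : K.Nonempty := ⟨(Classical.arbitrary _, 0), by simp [K]⟩
  obtain ⟨z, -, hz⟩ :=
    (lowerSemicontinuous_g.lowerSemicontinuousOn K).exists_isMinOn nonempty_K isCompact_K
  refine ⟨g z, g_pos z, fun σ l hl => ?_⟩
  calc g z
      ≤ g (σ, StrongDual.toWeakDual l) := hz (by simp [K, hl])
    _ = weavingEnergy p x σ l := sup_eq_left.2 (sub_le_iff_le_add.2 (hF σ l hl))

theorem exists_uniform_lower_bound_weavingEnergy [Finite κ] [Nonempty κ] (hp : 0 < p)
    (hx : ∀ (l : StrongDual 𝕜 E) k, Summable fun i => ‖l (x k i)‖ ^ p)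
    (hlower : ∀ σ, ∃ A > 0, ∀ l : StrongDual 𝕜 E, A * ‖l‖ ^ p ≤ weavingEnergy p x σ l) :
    ∃ A > 0, ∀ (σ : ι → κ) (l : StrongDual 𝕜 E), A * ‖l‖ ^ p ≤ weavingEnergy p x σ l := by
  cases nonempty_fintype κ
  have energy_pos (σ : ι → κ) (l : StrongDual 𝕜 E) (hl : l ≠ 0) : 0 < weavingEnergy p x σ l := by
    obtain ⟨A, hA, hσ⟩ := hlower σ
    have := norm_pos_iff.2 hl
    exact lt_of_lt_of_le (by positivity) (hσ l)
  obtain ⟨A, hA, F, hF⟩ := exists_le_weavingEnergy_add_sum hp.le hx hlower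
  obtain ⟨c, hc, hle⟩ := exists_pos_le_weavingEnergy_of_norm_eq_one hp hx energy_pos hA
    fun σ l hl => by simpa [hl] using hF σ l
  refine ⟨c, hc, fun σ l => ?_⟩
  rcases eq_or_ne l 0 with rfl | hl
  · simpa [Real.zero_rpow hp.ne'] using weavingEnergy_nonneg σ (0 : StrongDual 𝕜 E)
  · have hnorm : 0 < ‖l‖ := norm_pos_iff.2 hl
    have hunit := hle σ ((‖l‖⁻¹ : 𝕜) • l) (norm_smul_inv_norm hl)
    rw [weavingEnergy_smul, norm_inv, RCLike.norm_ofReal, abs_norm,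
      Real.inv_rpow hnorm.le] at hunit
    rwa [mul_comm, ← le_inv_mul_iff₀ (by positivity)]

end WeavingEnergy

section Frames

variable {E F ι : Type*} [NormedAddCommGroup E] [InnerProductSpace ℂ E]
  [NormedAddCommGroup F] [InnerProductSpace ℂ F] {φ ψ : ι → E} {A B C : ℝ}

lemma IsFrameWith.isBesselWith (hφ : IsFrameWith φ A B) : IsBesselWith φ B :=
  fun f => ⟨(hφ.2.2 f).1, (hφ.2.2 f).2.2⟩

lemma isBesselWith_weaving (hφ : IsBesselWith φ B) (hψ : IsBesselWith ψ C) (J : Set ι) :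
    IsBesselWith (weaving φ ψ J) (B + C) := by
  intro f
  have term_le (i : ι) : ‖⟪f, weaving φ ψ J i⟫‖ ^ 2 ≤ ‖⟪f, φ i⟫‖ ^ 2 + ‖⟪f, ψ i⟫‖ ^ 2 := by
    unfold weaving
    split_ifs
    · exact le_add_of_nonneg_right (sq_nonneg _)
    · exact le_add_of_nonneg_left (sq_nonneg _)
  have summable_add := (hφ f).1.add (hψ f).1
  have summable_weaving := summable_add.of_nonneg_of_le (fun _ => sq_nonneg _) term_le
  refine ⟨summable_weaving, ?_⟩
  calc ∑' i, ‖⟪f, weaving φ ψ J i⟫‖ ^ 2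
      ≤ ∑' i, (‖⟪f, φ i⟫‖ ^ 2 + ‖⟪f, ψ i⟫‖ ^ 2) :=
        summable_weaving.tsum_le_tsum term_le summable_add
    _ = ∑' i, ‖⟪f, φ i⟫‖ ^ 2 + ∑' i, ‖⟪f, ψ i⟫‖ ^ 2 := (hφ f).1.tsum_add (hψ f).1
    _ ≤ B * ‖f‖ ^ 2 + C * ‖f‖ ^ 2 := add_le_add (hφ f).2 (hψ f).2
    _ = (B + C) * ‖f‖ ^ 2 := by ring

lemma isBesselWith_iff_sum_le :
    IsBesselWith φ B ↔ ∀ (f : E) (s : Finset ι), ∑ i ∈ s, ‖⟪f, φ i⟫‖ ^ 2 ≤ B * ‖f‖ ^ 2 :=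
  ⟨fun h f s => ((h f).1.sum_le_tsum s fun _ _ => sq_nonneg _).trans (h f).2, fun h f =>
    ⟨summable_of_sum_le (fun _ => sq_nonneg _) (h f),
      Real.tsum_le_of_sum_le (fun _ => sq_nonneg _) (h f)⟩⟩

/-- The analysis operator `f ↦ (⟪φ i, f⟫)ᵢ` of a Bessel sequence. The inner product of the frame
inequality is conjugated here to make the operator linear. -/
def IsBesselWith.analysis (hφ : IsBesselWith φ B) : E →ₗ[ℂ] lp (fun _ : ι => ℂ) 2 where
  toFun f := ⟨fun i => ⟪φ i, f⟫, memℓp_gen (by simpa [norm_inner_symm] using (hφ f).1)⟩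
  map_add' f g := by ext i; exact inner_add_right _ _ _
  map_smul' c f := by ext i; exact inner_smul_right _ _ _

lemma IsBesselWith.norm_analysis_sq (hφ : IsBesselWith φ B) (f : E) :
    ‖hφ.analysis f‖ ^ 2 = ∑' i, ‖⟪f, φ i⟫‖ ^ 2 := by
  have hnorm := lp.norm_rpow_eq_tsum (p := 2) (by simp) (hφ.analysis f)
  simp only [ENNReal.toReal_ofNat, Real.rpow_two] at hnorm
  simp only [norm_inner_symm f]
  exact hnorm

lemma IsBesselWith.continuous_tsum (hφ : IsBesselWith φ B) :
    Continuous fun f => ∑' i, ‖⟪f, φ i⟫‖ ^ 2 := by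
  have analysis_le (f : E) : ‖hφ.analysis f‖ ≤ √B * ‖f‖ := by
    rw [← Real.sqrt_sq (norm_nonneg f), ← Real.sqrt_mul' B (sq_nonneg _)]
    exact Real.le_sqrt_of_sq_le (hφ.norm_analysis_sq f ▸ (hφ f).2)
  simp only [← hφ.norm_analysis_sq]
  exact (AddMonoidHomClass.continuous_of_bound hφ.analysis (√B) analysis_le).norm.pow 2

lemma IsBesselWith.comp_of_denseRange {e : E →ₗᵢ[ℂ] F} (he : DenseRange e)
    (hφ : IsBesselWith φ B) : IsBesselWith (e ∘ φ) B := by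
  rw [isBesselWith_iff_sum_le] at hφ ⊢
  intro g s
  induction g using he.induction_on with
  | hp => exact isClosed_le (by fun_prop) (by fun_prop)
  | ih f => simpa only [Function.comp_apply, e.inner_map_map, e.norm_map] using hφ f s

lemma isFrameWith_comp_iff {e : E →ₗᵢ[ℂ] F} (he : DenseRange e) :
    IsFrameWith (e ∘ φ) A B ↔ IsFrameWith φ A B := by
  constructor
  · rintro ⟨hA, hAB, h⟩
    refine ⟨hA, hAB, fun f => ?_⟩
    simpa only [Function.comp_apply, e.inner_map_map, e.norm_map] using h (e f)
  · intro hφ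
    have bessel := hφ.isBesselWith.comp_of_denseRange he
    have lower (g : F) : A * ‖g‖ ^ 2 ≤ ∑' i, ‖⟪g, (e ∘ φ) i⟫‖ ^ 2 := by
      induction g using he.induction_on with
      | hp => exact isClosed_le (by fun_prop) bessel.continuous_tsum
      | ih f =>
        simpa only [Function.comp_apply, e.inner_map_map, e.norm_map] using (hφ.2.2 f).2.1
    exact ⟨hφ.1, hφ.2.1, fun g => ⟨(bessel g).1, lower g, (bessel g).2⟩⟩

lemma comp_weaving {α β : Type*} (e : α → β) (u v : ι → α) (J : Set ι) :
    e ∘ weaving u v J = weaving (e ∘ u) (e ∘ v) J :=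
  funext fun _ => by simp only [Function.comp_apply, weaving, apply_ite e]

lemma weaving_setOf_eq_true {α : Type*} (u v : ι → α) (σ : ι → Bool) (i : ι) :
    weaving u v {j | σ j = true} i = cond (σ i) u v i := by
  unfold weaving
  cases h : σ i <;> simp [h]

lemma exists_uniform_lower_bound_weaving [CompleteSpace E]
    (h : ∀ J : Set ι, IsFrame (weaving φ ψ J)) :
    ∃ A > 0, ∀ (J : Set ι) (f : E), A * ‖f‖ ^ 2 ≤ ∑' i, ‖⟪f, weaving φ ψ J i⟫‖ ^ 2 := by
  let x : Bool → ι → E := fun k => cond k φ ψ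
  have energy_eq (σ : ι → Bool) (f : E) :
      weavingEnergy 2 x σ (InnerProductSpace.toDual ℂ E f) =
        ∑' i, ‖⟪f, weaving φ ψ {j | σ j = true} i⟫‖ ^ 2 := by
    simp only [weavingEnergy, x, weaving_setOf_eq_true, Real.rpow_two,
      InnerProductSpace.toDual_apply_apply]
  have summable_x (l : StrongDual ℂ E) (k : Bool) : Summable fun i => ‖l (x k i)‖ ^ (2 : ℝ) := by
    obtain ⟨f, rfl⟩ := (InnerProductSpace.toDual ℂ E).surjective l
    obtain ⟨A, B, hAB⟩ := h {_j : ι | k = true}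
    simpa only [weaving_setOf_eq_true, Real.rpow_two, InnerProductSpace.toDual_apply_apply]
      using (hAB.2.2 f).1
  obtain ⟨A, hA, hlower⟩ := exists_uniform_lower_bound_weavingEnergy two_pos summable_x
    fun σ => by
      obtain ⟨A, B, hAB⟩ := h {j | σ j = true}
      refine ⟨A, hAB.1, fun l => ?_⟩
      obtain ⟨f, rfl⟩ := (InnerProductSpace.toDual ℂ E).surjective l
      rw [energy_eq, Real.rpow_two, LinearIsometryEquiv.norm_map]
      exact (hAB.2.2 f).2.1
  refine ⟨A, hA, fun J f => ?_⟩
  classical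
  obtain ⟨σ, rfl⟩ : ∃ σ : ι → Bool, {j | σ j = true} = J := ⟨fun j => decide (j ∈ J), by simp⟩
  simpa only [energy_eq, Real.rpow_two, LinearIsometryEquiv.norm_map]
    using hlower σ (InnerProductSpace.toDual ℂ E f)

lemma weaving_univ {α : Type*} (u v : ι → α) : weaving u v Set.univ = u := by
  ext; simp [weaving]

lemma weaving_empty {α : Type*} (u v : ι → α) : weaving u v ∅ = v := by
  ext; simp [weaving]

lemma woven_of_forall_isFrame_weaving_of_complete [CompleteSpace E]
    (h : ∀ J : Set ι, IsFrame (weaving φ ψ J)) : Woven φ ψ := by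
  obtain ⟨A, hA, lower⟩ := exists_uniform_lower_bound_weaving h
  obtain ⟨_, B, hφ⟩ := weaving_univ φ ψ ▸ h Set.univ
  obtain ⟨_, C, hψ⟩ := weaving_empty φ ψ ▸ h ∅
  refine ⟨A, max A (B + C), fun J => ⟨hA, le_max_left _ _, fun f => ?_⟩⟩
  obtain ⟨summable, upper⟩ := isBesselWith_weaving hφ.isBesselWith hψ.isBesselWith J f
  exact ⟨summable, lower J f, upper.trans (by gcongr; exact le_max_right _ _)⟩

theorem woven_iff_weakly_woven_general (φ ψ : ι → E) :
    Woven φ ψ ↔ ∀ J : Set ι, IsFrame (weaving φ ψ J) := by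
  refine ⟨fun ⟨A, B, h⟩ J => ⟨A, B, h J⟩, fun h => ?_⟩
  let e : E →ₗᵢ[ℂ] UniformSpace.Completion E := UniformSpace.Completion.toComplₗᵢ
  have he : DenseRange e := UniformSpace.Completion.denseRange_coe
  have isFrame_comp (J : Set ι) : IsFrame (weaving (e ∘ φ) (e ∘ ψ) J) := by
    obtain ⟨A, B, hJ⟩ := h J
    exact ⟨A, B, comp_weaving e φ ψ J ▸ (isFrameWith_comp_iff he).2 hJ⟩
  obtain ⟨A, B, hAB⟩ := woven_of_forall_isFrame_weaving_of_complete isFrame_comp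
  exact ⟨A, B, fun J => (isFrameWith_comp_iff he).1 (comp_weaving e φ ψ J ▸ hAB J)⟩

end Frames

/-- Two frames are woven if and only if they are weakly woven,
i.e. every weaving is a frame (with bounds possibly depending on the subset). -/
theorem woven_iff_weakly_woven (φ ψ : I → H) (hφ : IsFrame φ) (hψ : IsFrame ψ) :
    Woven φ ψ ↔ ∀ J : Set I, IsFrame (weaving φ ψ J) :=
  woven_iff_weakly_woven_general φ ψ
end
end

section
/- Let φ = {φ_i}_{i∈I} be a frame for a separable Hilbert space H with frame bounds A_φ ≤ B_φ, and let T be a bounded invertible operator on H satisfying ‖I_H − T‖² < A_φ/B_φ. Then φ and Tφ = {Tφ_i}_{i∈I} are woven, with universal lower bound (√A_φ − √B_φ‖I_H − T*‖)². -/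
/-!
Replacing `φ i` by `T (φ i)` for `i ∉ J` perturbs `φ` by a subfamily of `(1 - T) φ`, which is a
Bessel sequence with bound `B ‖1 - T‖² < A`, whatever `J` is. Minkowski's inequality in `ℓ²` shows
that a perturbation of a frame by a Bessel sequence of bound `D < A` costs at most `√D` in the
square root of either frame bound, so the frame bounds obtained do not depend on `J`.
-/

open scoped ComplexInnerProductSpace

noncomputable section

variable {H : Type*} [NormedAddCommGroup H] [InnerProductSpace ℂ H] [CompleteSpace H]
variable {I : Type*} [Countable I]

/-- `φ` and `ψ` are woven with universal lower bound `A`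
(for some universal upper bound). -/
def WovenWithLowerBound (φ ψ : I → H) (A : ℝ) : Prop :=
  ∃ B : ℝ, ∀ J : Set I, IsFrameWith (weaving φ ψ J) A B

/-- The `ℓ²` norm of the sequence of analysis coefficients `⟪f, φ i⟫`, the square root of the sum
in the frame inequalities. It takes the junk value `0` when the coefficients are not square
summable. -/
def analysisNorm {E ι : Type*} [NormedAddCommGroup E] [InnerProductSpace ℂ E]
    (φ : ι → E) (f : E) : ℝ :=
  √(∑' i, ‖⟪f, φ i⟫‖ ^ 2)

theorem summable_and_sqrt_tsum_norm_add_sq_le {ι F : Type*} [SeminormedAddCommGroup F]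
    {x y : ι → F} (hx : Summable fun i => ‖x i‖ ^ 2) (hy : Summable fun i => ‖y i‖ ^ 2) :
    (Summable fun i => ‖x i + y i‖ ^ 2) ∧
      √(∑' i, ‖x i + y i‖ ^ 2) ≤ √(∑' i, ‖x i‖ ^ 2) + √(∑' i, ‖y i‖ ^ 2) := by
  have minkowski := Real.Lp_add_le_tsum_of_nonneg one_le_two (fun i => norm_nonneg (x i))
    (fun i => norm_nonneg (y i)) (by simpa using hx) (by simpa using hy)
  simp only [Real.rpow_ofNat, ← Real.sqrt_eq_rpow] at minkowski
  obtain ⟨hsum, hle⟩ := minkowski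
  have hterm : ∀ i, ‖x i + y i‖ ^ 2 ≤ (‖x i‖ + ‖y i‖) ^ 2 := fun i => by
    gcongr
    exact norm_add_le _ _
  have hxy : Summable fun i => ‖x i + y i‖ ^ 2 :=
    hsum.of_nonneg_of_le (fun i => sq_nonneg _) hterm
  exact ⟨hxy, (Real.sqrt_le_sqrt (hxy.tsum_le_tsum hterm hsum)).trans hle⟩

theorem sub_weaving {E ι : Type*} [NormedAddCommGroup E]
    (φ ψ : ι → E) (J : Set ι) :
    φ - weaving φ ψ J = Jᶜ.indicator (φ - ψ) := by
  ext i
  by_cases hi : i ∈ J <;> simp [weaving, hi]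

section Perturbation

variable {E ι : Type*} [NormedAddCommGroup E] [InnerProductSpace ℂ E]
variable {φ ψ : ι → E} {A B D : ℝ}

theorem sq_analysisNorm (φ : ι → E) (f : E) :
    analysisNorm φ f ^ 2 = ∑' i, ‖⟪f, φ i⟫‖ ^ 2 :=
  Real.sq_sqrt (tsum_nonneg fun _ => sq_nonneg _)

theorem summable_and_analysisNorm_add_le {f : E} (hφ : Summable fun i => ‖⟪f, φ i⟫‖ ^ 2)
    (hψ : Summable fun i => ‖⟪f, ψ i⟫‖ ^ 2) :
    (Summable fun i => ‖⟪f, (φ + ψ) i⟫‖ ^ 2) ∧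
      analysisNorm (φ + ψ) f ≤ analysisNorm φ f + analysisNorm ψ f := by
  simpa only [analysisNorm, Pi.add_apply, inner_add_right] using
    summable_and_sqrt_tsum_norm_add_sq_le hφ hψ

namespace IsBesselWith

theorem analysisNorm_le (hφ : IsBesselWith φ B) (f : E) : analysisNorm φ f ≤ √B * ‖f‖ :=
  calc
    analysisNorm φ f ≤ √(B * ‖f‖ ^ 2) := Real.sqrt_le_sqrt (hφ f).2
    _ = √B * ‖f‖ := by rw [Real.sqrt_mul' _ (sq_nonneg _), Real.sqrt_sq (norm_nonneg f)]

theorem neg (hφ : IsBesselWith φ B) : IsBesselWith (-φ) B := by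
  simpa only [IsBesselWith, Pi.neg_apply, inner_neg_right, norm_neg] using hφ

theorem add (hφ : IsBesselWith φ B) (hψ : IsBesselWith ψ D) :
    IsBesselWith (φ + ψ) ((√B + √D) ^ 2) := by
  intro f
  obtain ⟨hsum, hadd⟩ := summable_and_analysisNorm_add_le (hφ f).1 (hψ f).1
  have hle : analysisNorm (φ + ψ) f ≤ (√B + √D) * ‖f‖ := by
    linarith [hφ.analysisNorm_le f, hψ.analysisNorm_le f]
  rw [← sq_analysisNorm, ← mul_pow]
  exact ⟨hsum, pow_le_pow_left₀ (Real.sqrt_nonneg _) hle 2⟩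

theorem indicator (hφ : IsBesselWith φ B) (J : Set ι) : IsBesselWith (J.indicator φ) B := by
  intro f
  have hterm : ∀ i, ‖⟪f, J.indicator φ i⟫‖ ^ 2 ≤ ‖⟪f, φ i⟫‖ ^ 2 := fun i => by
    by_cases hi : i ∈ J <;> simp [hi]
  obtain ⟨hsum, hle⟩ := hφ f
  have hsum' := hsum.of_nonneg_of_le (fun i => sq_nonneg _) hterm
  exact ⟨hsum', (hsum'.tsum_le_tsum hterm hsum).trans hle⟩

theorem map [CompleteSpace E] {F : Type*} [NormedAddCommGroup F] [InnerProductSpace ℂ F]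
    [CompleteSpace F] (hφ : IsBesselWith φ B) (hB : 0 ≤ B) (S : E →L[ℂ] F) :
    IsBesselWith (fun i => S (φ i)) (B * ‖S‖ ^ 2) := by
  intro f
  have hadj : ‖S.adjoint f‖ ≤ ‖S‖ * ‖f‖ := by
    simpa only [LinearIsometryEquiv.norm_map] using S.adjoint.le_opNorm f
  obtain ⟨hsum, hle⟩ := hφ (S.adjoint f)
  simp only [ContinuousLinearMap.adjoint_inner_left] at hsum hle
  refine ⟨hsum, hle.trans ?_⟩
  rw [mul_assoc, ← mul_pow]
  gcongr

end IsBesselWith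

namespace IsFrameWith

theorem isBesselWith_s2 (hφ : IsFrameWith φ A B) : IsBesselWith φ B :=
  fun f => ⟨(hφ.2.2 f).1, (hφ.2.2 f).2.2⟩

theorem le_analysisNorm (hφ : IsFrameWith φ A B) (f : E) : √A * ‖f‖ ≤ analysisNorm φ f :=
  calc
    √A * ‖f‖ = √(A * ‖f‖ ^ 2) := by
      rw [Real.sqrt_mul' _ (sq_nonneg _), Real.sqrt_sq (norm_nonneg f)]
    _ ≤ analysisNorm φ f := Real.sqrt_le_sqrt (hφ.2.2 f).2.1

theorem of_isBesselWith_sub (hφ : IsFrameWith φ A B) (hsub : IsBesselWith (φ - ψ) D)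
    (hDA : D < A) : IsFrameWith ψ ((√A - √D) ^ 2) ((√B + √D) ^ 2) := by
  have hψ : IsBesselWith ψ ((√B + √D) ^ 2) := by
    simpa using hφ.isBesselWith_s2.add hsub.neg
  have hlower : ∀ f, (√A - √D) * ‖f‖ ≤ analysisNorm ψ f := fun f => by
    have hadd : analysisNorm φ f ≤ analysisNorm ψ f + analysisNorm (φ - ψ) f := by
      simpa using (summable_and_analysisNorm_add_le (hψ f).1 (hsub f).1).2
    linarith [hφ.le_analysisNorm f, hsub.analysisNorm_le f]
  obtain ⟨hA, hAB, -⟩ := hφ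
  have hgap : 0 < √A - √D := sub_pos.2 ((Real.sqrt_lt_sqrt_iff_of_pos hA).2 hDA)
  refine ⟨pow_pos hgap 2, ?_, fun f => ⟨(hψ f).1, ?_, (hψ f).2⟩⟩
  · gcongr
    linarith [Real.sqrt_le_sqrt hAB, Real.sqrt_nonneg D]
  · rw [← sq_analysisNorm, ← mul_pow]
    exact pow_le_pow_left₀ (by positivity) (hlower f) 2

end IsFrameWith

theorem IsFrameWith.wovenWithLowerBound_of_isBesselWith_sub (hφ : IsFrameWith φ A B)
    (hsub : IsBesselWith (φ - ψ) D) (hDA : D < A) :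
    WovenWithLowerBound φ ψ ((√A - √D) ^ 2) :=
  ⟨(√B + √D) ^ 2, fun J =>
    hφ.of_isBesselWith_sub (sub_weaving φ ψ J ▸ hsub.indicator Jᶜ) hDA⟩

theorem norm_one_sub_adjoint [CompleteSpace E] (T : E →L[ℂ] E) :
    ‖1 - T.adjoint‖ = ‖1 - T‖ := by
  rw [← ContinuousLinearMap.star_eq_adjoint, ← norm_star (1 - T), star_sub, star_one]

theorem woven_of_invertible_perturbation_general [CompleteSpace E] (hφ : IsFrameWith φ A B)
    (T : E →L[ℂ] E) (hT : ‖1 - T‖ ^ 2 < A / B) :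
    WovenWithLowerBound φ (fun i => T (φ i)) ((√A - √B * ‖1 - T.adjoint‖) ^ 2) := by
  have hB : 0 < B := hφ.1.trans_le hφ.2.1
  have hsub : IsBesselWith (φ - fun i => T (φ i)) (B * ‖1 - T‖ ^ 2) :=
    hφ.isBesselWith_s2.map hB.le (1 - T : E →L[ℂ] E)
  have hsqrt : √(B * ‖1 - T‖ ^ 2) = √B * ‖1 - T.adjoint‖ := by
    rw [norm_one_sub_adjoint, Real.sqrt_mul hB.le, Real.sqrt_sq (norm_nonneg _)]
  rw [← hsqrt]
  exact hφ.wovenWithLowerBound_of_isBesselWith_sub hsub ((lt_div_iff₀' hB).1 hT)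

end Perturbation

/-- If `φ` is a frame with bounds `A ≤ B` and `T` is a bounded
invertible operator with `‖I - T‖² < A / B`, then `φ` and `Tφ` are woven with universal
lower bound `(√A - √B * ‖I - T*‖)²`. -/
theorem woven_of_invertible_perturbation (φ : I → H) (A B : ℝ) (hφ : IsFrameWith φ A B)
    (T : H ≃L[ℂ] H)
    (hT : ‖(1 : H →L[ℂ] H) - (T : H →L[ℂ] H)‖ ^ 2 < A / B) :
    WovenWithLowerBound φ (fun i => T (φ i))
      ((Real.sqrt A -
        Real.sqrt B * ‖(1 : H →L[ℂ] H) - ContinuousLinearMap.adjoint (T : H →L[ℂ] H)‖) ^ 2) :=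
  woven_of_invertible_perturbation_general hφ T hT
end
end

section
/- Let m, n ∈ ℕ be relatively prime and let φ = {φ_i}_{i=1}^n be an ε-nearly equal-norm and ε-nearly Parseval frame for an m-dimensional Hilbert space H_m with lower frame bound A_φ, where 0 < ε < min{1/2, 8α√A_φ/(4√m + 27m²n(n−1)⁸)} for some α < 1. Then there exists an equal-norm Parseval frame ψ = {ψ_i}_{i=1}^n for H_m such that φ and ψ are woven. -/
/-!
Only one property of `φ` matters: it spans. In finite dimension two families are woven as soon as
every weaving spans, there being finitely many of them. The harmonic frame `η` is an equal-norm
Parseval frame of full spark, so for each index set `J` the dimensions of `span φ(J)` and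
`span η(Jᶜ)` add up to at least `dim H`, and some unitary moves the second span into general
position with respect to the first. To find one unitary that serves every `J`, write it, up to a
unimodular scalar, as `exp (i a)` with `a` self-adjoint. Subspaces `V` and `exp (i a) W` span `H`
exactly when `det (P_V + exp (i a) P_W exp (-i a)) ≠ 0`, and this determinant is real-analytic in
`a`; a countable family of nonzero analytic functions on a Banach space has a common nonvanishing
point.
-/

open scoped ComplexInnerProductSpace

noncomputable section

variable {H : Type*} [NormedAddCommGroup H] [InnerProductSpace ℂ H] [CompleteSpace H]
variable {I : Type*} [Countable I]

section GeneralPosition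

variable {𝕜 E : Type*} [RCLike 𝕜] [NormedAddCommGroup E] [InnerProductSpace 𝕜 E]

lemma exists_linearIsometryEquiv_map_le [FiniteDimensional 𝕜 E] {V W : Submodule 𝕜 E}
    (h : Module.finrank 𝕜 V ≤ Module.finrank 𝕜 W) :
    ∃ L : E ≃ₗᵢ[𝕜] E, V.map (L.toLinearEquiv : E →ₗ[𝕜] E) ≤ W := by
  let bV := stdOrthonormalBasis 𝕜 V
  let bW := stdOrthonormalBasis 𝕜 W
  let v : Fin (Module.finrank 𝕜 V) → W := bW ∘ Fin.castLE h
  have hv : Orthonormal 𝕜 v := bW.orthonormal.comp _ (Fin.castLE_injective h)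
  let T : V →ₗᵢ[𝕜] W := (bV.toBasis.constr 𝕜 v).isometryOfOrthonormal (v := bV.toBasis)
    (by simp) (by simpa [Function.comp_def] using hv)
  let T' : V →ₗᵢ[𝕜] E := W.subtypeₗᵢ.comp T
  refine ⟨T'.extend.toLinearIsometryEquiv rfl, Submodule.map_le_iff_le_comap.2 fun f hf ↦ ?_⟩
  change T'.extend f ∈ W
  rw [show T'.extend f = T' ⟨f, hf⟩ from T'.extend_apply ⟨f, hf⟩]
  exact (T ⟨f, hf⟩).2

lemma exists_linearIsometryEquiv_sup_map_eq_top [FiniteDimensional 𝕜 E] {V W : Submodule 𝕜 E}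
    (h : Module.finrank 𝕜 E ≤ Module.finrank 𝕜 V + Module.finrank 𝕜 W) :
    ∃ L : E ≃ₗᵢ[𝕜] E, V ⊔ W.map (L.toLinearEquiv : E →ₗ[𝕜] E) = ⊤ := by
  have hV : Module.finrank 𝕜 Vᗮ ≤ Module.finrank 𝕜 W := by
    have := V.finrank_add_finrank_orthogonal
    omega
  obtain ⟨L, hL⟩ := exists_linearIsometryEquiv_map_le hV
  have hV' : Vᗮ ≤ W.map (L.symm.toLinearEquiv : E →ₗ[𝕜] E) := fun f hf ↦
    ⟨L f, hL (Submodule.mem_map_of_mem hf), L.symm_apply_apply f⟩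
  exact ⟨L.symm, top_unique <| V.sup_orthogonal_of_hasOrthogonalProjection.ge.trans <|
    sup_le_sup_left hV' V⟩

lemma ker_starProjection_add_starProjection (V W : Submodule 𝕜 E) [V.HasOrthogonalProjection]
    [W.HasOrthogonalProjection] :
    (V.starProjection + W.starProjection).ker = (V ⊔ W)ᗮ := by
  rw [← Submodule.inf_orthogonal, ← V.ker_starProjection, ← W.ker_starProjection]
  refine le_antisymm (fun f hf ↦ ?_) fun f ⟨hV, hW⟩ ↦ ?_
  · have hf : V.starProjection f + W.starProjection f = 0 := hf
    have hsum : ‖V.starProjection f‖ ^ 2 + ‖W.starProjection f‖ ^ 2 = 0 := by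
      have hV : RCLike.re (inner 𝕜 (V.starProjection f) f) = ‖V.starProjection f‖ ^ 2 :=
        V.re_inner_starProjection_eq_normSq f
      have hW : RCLike.re (inner 𝕜 (W.starProjection f) f) = ‖W.starProjection f‖ ^ 2 :=
        W.re_inner_starProjection_eq_normSq f
      rw [← hV, ← hW, ← map_add, ← inner_add_left, hf, inner_zero_left, map_zero]
    rw [add_eq_zero_iff_of_nonneg (sq_nonneg _) (sq_nonneg _), sq_eq_zero_iff, sq_eq_zero_iff,
      norm_eq_zero, norm_eq_zero] at hsum
    exact hsum
  · change V.starProjection f + W.starProjection f = 0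
    rw [show V.starProjection f = 0 from hV, show W.starProjection f = 0 from hW, add_zero]

lemma det_starProjection_add_starProjection_ne_zero_iff [FiniteDimensional 𝕜 E]
    (V W : Submodule 𝕜 E) :
    (V.starProjection + W.starProjection).det ≠ 0 ↔ V ⊔ W = ⊤ := by
  rw [ContinuousLinearMap.det, Ne, LinearMap.det_eq_zero_iff_ker_ne_bot, not_not,
    ← Submodule.orthogonal_eq_bot_iff, ← ker_starProjection_add_starProjection]

lemma starProjection_map_linearIsometryEquiv [CompleteSpace E] (u : unitary (E →L[𝕜] E))
    (W : Submodule 𝕜 E) [W.HasOrthogonalProjection] :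
    (W.map ((Unitary.linearIsometryEquiv u).toLinearEquiv : E →ₗ[𝕜] E)).starProjection =
      (u : E →L[𝕜] E) * W.starProjection * star (u : E →L[𝕜] E) := by
  ext f
  exact Submodule.starProjection_map_apply (Unitary.linearIsometryEquiv u) W f

lemma det_starProjection_add_conj_ne_zero_iff [FiniteDimensional 𝕜 E] [CompleteSpace E]
    (V W : Submodule 𝕜 E) (u : unitary (E →L[𝕜] E)) :
    (V.starProjection +
      (u : E →L[𝕜] E) * W.starProjection * star (u : E →L[𝕜] E)).det ≠ 0 ↔
      V ⊔ W.map ((Unitary.linearIsometryEquiv u).toLinearEquiv : E →ₗ[𝕜] E) = ⊤ := by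
  rw [← starProjection_map_linearIsometryEquiv]
  exact det_starProjection_add_starProjection_ne_zero_iff _ _

end GeneralPosition

section Analytic

lemma analyticAt_continuousLinearMap_det {𝕜 E : Type*} [NontriviallyNormedField 𝕜]
    [CompleteSpace 𝕜] [NormedAddCommGroup E] [NormedSpace 𝕜 E] [FiniteDimensional 𝕜 E]
    (T : E →L[𝕜] E) : AnalyticAt 𝕜 (fun T : E →L[𝕜] E ↦ T.det) T := by
  let b := Module.finBasis 𝕜 E
  have hdet : (fun T : E →L[𝕜] E ↦ T.det) =
      fun T : E →L[𝕜] E ↦ (LinearMap.toMatrix b b (T : E →ₗ[𝕜] E)).det :=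
    funext fun T ↦ (LinearMap.det_toMatrix b T).symm
  have hentry (i j) :
      AnalyticAt 𝕜 (fun T : E →L[𝕜] E ↦ LinearMap.toMatrix b b (T : E →ₗ[𝕜] E) i j) T := by
    simp only [LinearMap.toMatrix_apply]
    exact ((b.coord i).toContinuousLinearMap.comp
      (ContinuousLinearMap.apply 𝕜 E (b j))).analyticAt T
  simp only [hdet, Matrix.det_apply']
  exact Finset.analyticAt_fun_sum _ fun σ _ ↦ analyticAt_const.mul <|
    Finset.analyticAt_fun_prod _ fun i _ ↦ hentry _ _

lemma dense_setOf_ne_zero_of_analyticOnNhd {𝕜 E F : Type*} [NontriviallyNormedField 𝕜]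
    [NormedAddCommGroup E] [NormedSpace 𝕜 E] [PreconnectedSpace E] [NormedAddCommGroup F]
    [NormedSpace 𝕜 F] {g : E → F} (hg : AnalyticOnNhd 𝕜 g Set.univ) (hne : g ≠ 0) :
    Dense {x | g x ≠ 0} := by
  change Dense {x | g x = 0}ᶜ
  refine interior_eq_empty_iff_dense_compl.1 <| Set.eq_empty_iff_forall_notMem.2 fun x hx ↦ ?_
  have hx' : g =ᶠ[nhds x] 0 := mem_interior_iff_mem_nhds.1 hx
  exact hne (hg.eq_of_eventuallyEq (fun _ _ ↦ analyticAt_const) hx')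

lemma exists_forall_ne_zero_of_analyticOnNhd {ι 𝕜 E F : Type*} [Countable ι]
    [NontriviallyNormedField 𝕜] [NormedAddCommGroup E] [NormedSpace 𝕜 E] [PreconnectedSpace E]
    [BaireSpace E] [NormedAddCommGroup F] [NormedSpace 𝕜 F] {g : ι → E → F}
    (hg : ∀ j, AnalyticOnNhd 𝕜 (g j) Set.univ) (hne : ∀ j, g j ≠ 0) :
    ∃ x, ∀ j, g j x ≠ 0 := by
  have hopen (j) : IsOpen {x | g j x ≠ 0} :=
    isOpen_ne_fun (continuousOn_univ.1 (hg j).continuousOn) continuous_const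
  have hdense (j) : Dense {x | g j x ≠ 0} := dense_setOf_ne_zero_of_analyticOnNhd (hg j) (hne j)
  obtain ⟨x, hx⟩ := (dense_iInter_of_isOpen hopen hdense).nonempty
  exact ⟨x, Set.mem_iInter.1 hx⟩

end Analytic

section Unitary

variable {A : Type*} [CStarAlgebra A]

/-- A unimodular multiple of `u` has `-1` outside its spectrum, so the principal branch of the
argument is available. -/
lemma exists_expUnitary_eq_smul (u : unitary A)
    (hu : ¬ Metric.sphere (0 : ℂ) 1 ⊆ spectrum ℂ (u : A)) :
    ∃ (z : unitary ℂ) (a : selfAdjoint A), selfAdjoint.expUnitary a = z • u := by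
  obtain ⟨w, hw, hwu⟩ := Set.not_subset.1 hu
  have hw : ‖w‖ = 1 := mem_sphere_zero_iff_norm.1 hw
  have hw0 : w ≠ 0 := norm_ne_zero_iff.1 (hw ▸ one_ne_zero)
  let z : unitary ℂ := ⟨-w⁻¹, by
    simp [Unitary.mem_iff, Complex.mul_conj, ← Complex.normSq_eq_conj_mul_self,
      Complex.normSq_eq_norm_sq, hw, ← mul_inv]⟩
  have hz : -1 ∉ spectrum ℂ ((z • u : unitary A) : A) := by
    have hzw : -1 = (Unitary.toUnits z : ℂ) * w := by simp [z, hw0]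
    intro h
    rw [hzw] at h
    exact hwu ((spectrum.smul_mem_smul_iff (r := Unitary.toUnits z)).1 h)
  exact ⟨z, _, expUnitary_argSelfAdjoint ((Unitary.norm_sub_one_lt_two_iff (z • u).2).2 hz)⟩

lemma analyticAt_expUnitary (a : selfAdjoint A) :
    AnalyticAt ℝ (fun a ↦ (selfAdjoint.expUnitary a : A)) a := by
  simp only [selfAdjoint.expUnitary_coe]
  have hexp : AnalyticAt ℝ (NormedSpace.exp : A → A) (Complex.I • (a : A)) :=
    NormedSpace.exp_analytic _
  have hsmul : AnalyticAt ℝ (fun a : selfAdjoint A ↦ Complex.I • (a : A)) a :=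
    ((Complex.I • ContinuousLinearMap.id ℝ A).comp
      (selfAdjoint.submodule ℝ A).subtypeL).analyticAt a
  exact AnalyticAt.comp (g := NormedSpace.exp) (f := fun a : selfAdjoint A ↦ Complex.I • (a : A))
    hexp hsmul

lemma exists_forall_expUnitary_ne_zero {ι F : Type*} [Countable ι] [NormedAddCommGroup F]
    [NormedSpace ℝ F] {g : ι → A → F} (hg : ∀ j, AnalyticOnNhd ℝ (g j) Set.univ)
    (hne : ∀ j, ∃ a : selfAdjoint A, g j (selfAdjoint.expUnitary a) ≠ 0) :
    ∃ a : selfAdjoint A, ∀ j, g j (selfAdjoint.expUnitary a) ≠ 0 := by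
  have : CompleteSpace (selfAdjoint A) :=
    (isClosed_eq continuous_star continuous_id).completeSpace_coe
  exact exists_forall_ne_zero_of_analyticOnNhd (𝕜 := ℝ)
    (fun j a _ ↦ (hg j _ trivial).fun_comp (analyticAt_expUnitary a))
    fun j ↦ Function.ne_iff.2 (hne j)

end Unitary

section GeneralPositionComplex

variable {E ι : Type*} [NormedAddCommGroup E] [InnerProductSpace ℂ E]

lemma exists_expUnitary_eq_smul_of_finiteDimensional [FiniteDimensional ℂ E] [CompleteSpace E]
    (u : unitary (E →L[ℂ] E)) :
    ∃ (z : unitary ℂ) (a : selfAdjoint (E →L[ℂ] E)), selfAdjoint.expUnitary a = z • u := by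
  have hfin : (spectrum ℂ (u : E →L[ℂ] E)).Finite := by
    rw [← AlgEquiv.spectrum_eq (Module.End.toContinuousLinearMap E).symm (u : E →L[ℂ] E)]
    exact Module.End.finite_spectrum _
  have hinf : (Metric.sphere (0 : ℂ) 1).Infinite :=
    (isPreconnected_sphere (by simp [Complex.rank_real_complex]) 0 1).infinite_of_nontrivial
      ⟨1, by simp, -1, by simp, by norm_num⟩
  exact exists_expUnitary_eq_smul u fun h ↦ hinf (hfin.subset h)

lemma analyticOnNhd_det_add_conj [FiniteDimensional ℂ E] [CompleteSpace E]
    (S T : E →L[ℂ] E) :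
    AnalyticOnNhd ℝ (fun u : E →L[ℂ] E ↦ (S + u * T * star u).det) Set.univ := fun u _ ↦ by
  have hstar := (starL' ℝ : (E →L[ℂ] E) ≃L[ℝ] _).analyticAt u
  exact (analyticAt_continuousLinearMap_det _).restrictScalars.fun_comp
    (analyticAt_const.add ((analyticAt_id.mul analyticAt_const).mul hstar))

lemma exists_linearIsometryEquiv_forall_sup_map_eq_top [Countable ι] [FiniteDimensional ℂ E]
    {V W : ι → Submodule ℂ E}
    (h : ∀ j, Module.finrank ℂ E ≤ Module.finrank ℂ (V j) + Module.finrank ℂ (W j)) :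
    ∃ L : E ≃ₗᵢ[ℂ] E, ∀ j, V j ⊔ (W j).map (L.toLinearEquiv : E →ₗ[ℂ] E) = ⊤ := by
  have : CompleteSpace E := FiniteDimensional.complete ℂ E
  obtain ⟨a, ha⟩ := exists_forall_expUnitary_ne_zero
    (fun j ↦ analyticOnNhd_det_add_conj (V j).starProjection (W j).starProjection) fun j ↦ by
      obtain ⟨L, hL⟩ := exists_linearIsometryEquiv_sup_map_eq_top (h j)
      obtain ⟨z, a, ha⟩ :=
        exists_expUnitary_eq_smul_of_finiteDimensional (Unitary.linearIsometryEquiv.symm L)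
      refine ⟨a, (det_starProjection_add_conj_ne_zero_iff _ _ _).2 ?_⟩
      have hmap : ((Unitary.linearIsometryEquiv (z • Unitary.linearIsometryEquiv.symm L)
          ).toLinearEquiv : E →ₗ[ℂ] E) = (z : ℂ) • (L.toLinearEquiv : E →ₗ[ℂ] E) := rfl
      rwa [ha, hmap, Submodule.map_smul _ _ _ (Unitary.isUnit_coe (U := z)).ne_zero]
  exact ⟨_, fun j ↦ (det_starProjection_add_conj_ne_zero_iff _ _ _).1 (ha j)⟩

end GeneralPositionComplex

section FullSpark

variable {𝕜 E ι : Type*} [DivisionRing 𝕜] [AddCommGroup E] [Module 𝕜 E] {η : ι → E}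

variable (𝕜) in
/-- A family of vectors has full spark if every subfamily with at most `dim E` members is linearly
independent. -/
def IsFullSpark (η : ι → E) : Prop :=
  ∀ K : Finset ι, K.card ≤ Module.finrank 𝕜 E → LinearIndepOn 𝕜 η K

lemma IsFullSpark.comp_injective {κ : Type*} {e : κ → ι} (hη : IsFullSpark 𝕜 η)
    (he : Function.Injective e) : IsFullSpark 𝕜 (η ∘ e) := fun K hK ↦ by
  have h := hη (K.map ⟨e, he⟩) (by rwa [Finset.card_map])
  rw [Finset.coe_map] at h
  exact h.comp_of_image he.injOn

lemma IsFullSpark.min_le_finrank_span_image (hη : IsFullSpark 𝕜 η) (K : Finset ι) :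
    min (Module.finrank 𝕜 E) K.card ≤ Module.finrank 𝕜 (Submodule.span 𝕜 (η '' K)) := by
  obtain ⟨K', hK', hcard⟩ := Finset.exists_subset_card_eq (min_le_right (Module.finrank 𝕜 E) K.card)
  have hli : LinearIndepOn 𝕜 η K' := hη K' (hcard.trans_le (min_le_left _ _))
  have : Module.Finite 𝕜 (Submodule.span 𝕜 (η '' K)) :=
    FiniteDimensional.span_of_finite 𝕜 (K.finite_toSet.image η)
  calc min (Module.finrank 𝕜 E) K.card
      = Module.finrank 𝕜 (Submodule.span 𝕜 (η '' K')) := by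
        rw [Set.image_eq_range, finrank_span_eq_card hli]
        simp [hcard]
    _ ≤ Module.finrank 𝕜 (Submodule.span 𝕜 (η '' K)) :=
        Submodule.finrank_mono (Submodule.span_mono (Set.image_mono (by exact_mod_cast hK')))

lemma finrank_le_finrank_span_image_add_card {φ : ι → E} [Fintype ι] [DecidableEq ι]
    (hφ : Submodule.span 𝕜 (Set.range φ) = ⊤) (J : Finset ι) :
    Module.finrank 𝕜 E ≤ Module.finrank 𝕜 (Submodule.span 𝕜 (φ '' J)) + Jᶜ.card := by
  have (K : Finset ι) : FiniteDimensional 𝕜 (Submodule.span 𝕜 (φ '' K)) :=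
    FiniteDimensional.span_of_finite 𝕜 (K.finite_toSet.image φ)
  have hsup : Submodule.span 𝕜 (φ '' J) ⊔ Submodule.span 𝕜 (φ '' (Jᶜ : Finset ι)) = ⊤ := by
    rw [← Submodule.span_union, ← Set.image_union, Finset.coe_compl, Set.union_compl_self,
      Set.image_univ, hφ]
  have hcard : Module.finrank 𝕜 (Submodule.span 𝕜 (φ '' (Jᶜ : Finset ι))) ≤ Jᶜ.card := by
    classical
    rw [← Finset.coe_image]
    exact (finrank_span_finset_le_card _).trans Finset.card_image_le
  calc Module.finrank 𝕜 E
      ≤ Module.finrank 𝕜 (Submodule.span 𝕜 (φ '' J)) +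
          Module.finrank 𝕜 (Submodule.span 𝕜 (φ '' (Jᶜ : Finset ι))) := by
        rw [← finrank_top 𝕜 E, ← hsup]
        exact Submodule.finrank_add_le_finrank_add_finrank _ _
    _ ≤ Module.finrank 𝕜 (Submodule.span 𝕜 (φ '' J)) + Jᶜ.card := Nat.add_le_add_left hcard _

lemma IsFullSpark.finrank_le_finrank_span_add_finrank_span_compl {φ : ι → E} [Fintype ι]
    [DecidableEq ι] (hη : IsFullSpark 𝕜 η) (hφ : Submodule.span 𝕜 (Set.range φ) = ⊤)
    (J : Finset ι) :
    Module.finrank 𝕜 E ≤ Module.finrank 𝕜 (Submodule.span 𝕜 (φ '' J)) +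
      Module.finrank 𝕜 (Submodule.span 𝕜 (η '' (Jᶜ : Finset ι))) := by
  have h₁ := finrank_le_finrank_span_image_add_card hφ J
  have h₂ := hη.min_le_finrank_span_image Jᶜ
  omega

end FullSpark

section HarmonicFrame

lemma linearIndepOn_pow {R ι : Type*} [CommRing R] [IsDomain R] {x : ι → R} {K : Finset ι}
    (hx : Set.InjOn x K) {m : ℕ} (hK : K.card ≤ m) :
    LinearIndepOn R (fun (i : ι) (k : Fin m) ↦ x i ^ (k : ℕ)) K := by
  refine (linearIndependent_equiv K.equivFin.symm).1 (Fintype.linearIndependent_iff.2 fun a ha ↦ ?_)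
  have hinj : Function.Injective fun j ↦ x (K.equivFin.symm j) :=
    hx.injective.comp K.equivFin.symm.injective
  refine congrFun (Matrix.eq_zero_of_forall_pow_sum_mul_pow_eq_zero hinj (v := a) fun k ↦ ?_)
  simpa using congrFun ha (k.castLE hK)

variable {E : Type*} [NormedAddCommGroup E]

section RCLike

variable {𝕜 : Type*} [RCLike 𝕜] [InnerProductSpace 𝕜 E]

lemma norm_sq_sum_smul_of_orthonormal {κ : Type*} {v : κ → E} (hv : Orthonormal 𝕜 v) (s : Finset κ)
    (c : κ → 𝕜) : ‖∑ k ∈ s, c k • v k‖ ^ 2 = ∑ k ∈ s, ‖c k‖ ^ 2 := by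
  rw [← inner_self_eq_norm_sq (𝕜 := 𝕜), hv.inner_sum, map_sum]
  exact Finset.sum_congr rfl fun k _ ↦ by rw [RCLike.conj_mul]; norm_cast

lemma sum_norm_sq_inner_sum_smul_of_orthonormal {ι κ : Type*} [Fintype ι] [Fintype κ]
    {U : κ → EuclideanSpace 𝕜 ι} (hU : Orthonormal 𝕜 U) (b : OrthonormalBasis κ 𝕜 E) (f : E) :
    ∑ i, ‖inner 𝕜 f (∑ k, U k i • b k)‖ ^ 2 = ‖f‖ ^ 2 := by
  have hcoord (i) : inner 𝕜 f (∑ k, U k i • b k) = (∑ k, inner 𝕜 f (b k) • U k) i := by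
    simp [inner_sum, inner_smul_right, mul_comm]
  simp_rw [hcoord, ← EuclideanSpace.norm_sq_eq, norm_sq_sum_smul_of_orthonormal hU,
    b.sum_sq_norm_inner_left]

end RCLike

variable [InnerProductSpace ℂ E] {m n : ℕ} [NeZero n]

lemma orthonormal_stdAddChar_pow (hmn : m ≤ n) :
    Orthonormal ℂ fun k : Fin m ↦ (WithLp.toLp 2 fun i : ZMod n ↦
      (√n : ℂ)⁻¹ * ZMod.stdAddChar i ^ (k : ℕ) : EuclideanSpace ℂ (ZMod n)) := by
  classical
  refine orthonormal_iff_ite.2 fun k l ↦ ?_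
  have hchar (i : ZMod n) : ZMod.stdAddChar i ^ (l : ℕ) * star (ZMod.stdAddChar i ^ (k : ℕ)) =
      ZMod.stdAddChar (i * ((l : ℕ) - (k : ℕ) : ZMod n)) := by
    rw [mul_sub, sub_eq_add_neg, AddChar.map_add_eq_mul, AddChar.map_neg_eq_conj, mul_comm i,
      mul_comm i, ← nsmul_eq_mul, ← nsmul_eq_mul, AddChar.map_nsmul_eq_pow,
      AddChar.map_nsmul_eq_pow]
    rfl
  have hcast : ((l : ℕ) - (k : ℕ) : ZMod n) = 0 ↔ k = l := by
    rw [sub_eq_zero, (CharP.natCast_injOn_Iio (ZMod n) n).eq_iff (l.2.trans_le hmn)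
      (k.2.trans_le hmn), Fin.val_inj, eq_comm]
  have hsqrt : (√n : ℂ)⁻¹ * (√n : ℂ)⁻¹ * n = 1 := by
    have hn : (n : ℝ) ≠ 0 := NeZero.ne _
    norm_cast
    rw [← mul_inv, Real.mul_self_sqrt n.cast_nonneg, inv_mul_cancel₀ hn]
  calc _ = (√n : ℂ)⁻¹ * (√n : ℂ)⁻¹ *
        ∑ i : ZMod n, ZMod.stdAddChar (i * ((l : ℕ) - (k : ℕ) : ZMod n)) := by
        simp only [PiLp.inner_apply, RCLike.inner_apply, ← hchar, Finset.mul_sum]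
        refine Finset.sum_congr rfl fun i _ ↦ ?_
        simp
        ring
    _ = if k = l then 1 else 0 := by
        rw [AddChar.sum_mulShift _ (ZMod.isPrimitive_stdAddChar n), ZMod.card]
        simp only [hcast]
        split_ifs <;> simp [hsqrt]

/-- The harmonic frame: the columns of the first `m` rows of the unitary `n × n` Fourier matrix, as
coordinates in the orthonormal basis `b`. -/
def harmonicFrame (b : OrthonormalBasis (Fin m) ℂ E) (n : ℕ) [NeZero n] (i : ZMod n) : E :=
  ∑ k : Fin m, ((√n : ℂ)⁻¹ * ZMod.stdAddChar i ^ (k : ℕ)) • b k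

lemma norm_harmonicFrame (b : OrthonormalBasis (Fin m) ℂ E) (i : ZMod n) :
    ‖harmonicFrame b n i‖ = √(m / n) := by
  rw [← Real.sqrt_sq (norm_nonneg _), harmonicFrame, norm_sq_sum_smul_of_orthonormal b.orthonormal]
  simp [div_eq_mul_inv]

lemma sum_norm_sq_inner_harmonicFrame (b : OrthonormalBasis (Fin m) ℂ E) (hmn : m ≤ n) (f : E) :
    ∑ i, ‖inner ℂ f (harmonicFrame b n i)‖ ^ 2 = ‖f‖ ^ 2 :=
  sum_norm_sq_inner_sum_smul_of_orthonormal (orthonormal_stdAddChar_pow hmn) b f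

lemma isFullSpark_harmonicFrame (b : OrthonormalBasis (Fin m) ℂ E) :
    IsFullSpark ℂ (harmonicFrame b n) := fun K hK ↦ by
  have hn : (√n : ℂ)⁻¹ ≠ 0 := by simp [NeZero.ne n]
  let T : (Fin m → ℂ) →ₗ[ℂ] E := (√n : ℂ)⁻¹ • (b.toBasis.equivFun.symm : (Fin m → ℂ) →ₗ[ℂ] E)
  have hT : harmonicFrame b n = T ∘ fun i k ↦ ZMod.stdAddChar i ^ (k : ℕ) := by
    ext i
    simp only [harmonicFrame, Function.comp_apply, T, LinearMap.smul_apply,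
      LinearEquiv.coe_coe, b.toBasis.equivFun_symm_apply, b.coe_toBasis, Finset.smul_sum, mul_smul]
  rw [Module.finrank_eq_card_basis b.toBasis, Fintype.card_fin] at hK
  rw [hT]
  refine (linearIndepOn_pow ZMod.injective_stdAddChar.injOn hK).map' T ?_
  rw [LinearMap.ker_smul _ _ hn, LinearEquiv.ker]

lemma exists_equalNorm_parseval_isFullSpark [FiniteDimensional ℂ E] [Nontrivial E] {ι : Type*}
    [Fintype ι] (h : Module.finrank ℂ E ≤ Fintype.card ι) :
    ∃ η : ι → E, (∃ c : ℝ, 0 < c ∧ ∀ i, ‖η i‖ = c) ∧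
      (∀ f, ∑ i, ‖inner ℂ f (η i)‖ ^ 2 = ‖f‖ ^ 2) ∧ IsFullSpark ℂ η := by
  have hm : 0 < Module.finrank ℂ E := Module.finrank_pos
  have : NeZero (Fintype.card ι) := ⟨by omega⟩
  let b := stdOrthonormalBasis ℂ E
  let e : ι ≃ ZMod (Fintype.card ι) := Fintype.equivOfCardEq (ZMod.card _).symm
  refine ⟨harmonicFrame b (Fintype.card ι) ∘ e, ⟨_, ?_, fun i ↦ norm_harmonicFrame b (e i)⟩,
    fun f ↦ ?_, (isFullSpark_harmonicFrame b).comp_injective e.injective⟩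
  · have : 0 < Fintype.card ι := by omega
    positivity
  · rw [← sum_norm_sq_inner_harmonicFrame b h f]
    exact e.sum_comp fun i ↦ ‖inner ℂ f (harmonicFrame b _ i)‖ ^ 2

end HarmonicFrame

section FrameBounds

variable {𝕜 E ι : Type*} [RCLike 𝕜] [NormedAddCommGroup E] [InnerProductSpace 𝕜 E] {φ : ι → E}

lemma mem_orthogonal_span_range_iff {f : E} :
    f ∈ (Submodule.span 𝕜 (Set.range φ))ᗮ ↔ ∀ i, inner 𝕜 (φ i) f = 0 := by
  rw [← Submodule.span_singleton_le_iff_mem, ← Submodule.isOrtho_iff_le, Submodule.isOrtho_comm,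
    Submodule.isOrtho_span]
  simp

lemma span_range_eq_top_iff [Finite ι] :
    Submodule.span 𝕜 (Set.range φ) = ⊤ ↔ ∀ f : E, (∀ i, inner 𝕜 (φ i) f = 0) → f = 0 := by
  have := FiniteDimensional.span_of_finite 𝕜 (Set.finite_range φ)
  rw [← Submodule.orthogonal_eq_bot_iff, Submodule.eq_bot_iff]
  simp_rw [mem_orthogonal_span_range_iff]

variable [Fintype ι]

lemma span_range_eq_top_of_lower_bound {A : ℝ} (hA : 0 < A)
    (h : ∀ f : E, A * ‖f‖ ^ 2 ≤ ∑ i, ‖inner 𝕜 f (φ i)‖ ^ 2) :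
    Submodule.span 𝕜 (Set.range φ) = ⊤ := by
  refine span_range_eq_top_iff.2 fun f hf ↦ ?_
  have hsq : A * ‖f‖ ^ 2 ≤ 0 := by simpa [norm_inner_symm f, hf] using h f
  exact norm_eq_zero.1 (sq_eq_zero_iff.1 (le_antisymm (by nlinarith) (sq_nonneg _)))

lemma exists_frame_bounds_of_span_eq_top (hφ : Submodule.span 𝕜 (Set.range φ) = ⊤) :
    ∃ A B : ℝ, 0 < A ∧ ∀ f : E, A * ‖f‖ ^ 2 ≤ ∑ i, ‖inner 𝕜 f (φ i)‖ ^ 2 ∧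
      ∑ i, ‖inner 𝕜 f (φ i)‖ ^ 2 ≤ B * ‖f‖ ^ 2 := by
  have : FiniteDimensional 𝕜 E := .of_fg_top (hφ ▸ Submodule.fg_span (Set.finite_range φ))
  let T : E →L[𝕜] EuclideanSpace 𝕜 ι :=
    (EuclideanSpace.equiv ι 𝕜).symm ∘L ContinuousLinearMap.pi fun i ↦ innerSL 𝕜 (φ i)
  have hT (f) : ‖T f‖ ^ 2 = ∑ i, ‖inner 𝕜 f (φ i)‖ ^ 2 := by
    simp_rw [EuclideanSpace.norm_sq_eq, norm_inner_symm f]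
    rfl
  have hker : (T : E →ₗ[𝕜] EuclideanSpace 𝕜 ι).ker = ⊥ := LinearMap.ker_eq_bot'.2 fun f hf ↦
    span_range_eq_top_iff.1 hφ f fun i ↦ congrFun (congrArg WithLp.ofLp hf) i
  obtain ⟨K, hK, hanti⟩ := (T : E →ₗ[𝕜] EuclideanSpace 𝕜 ι).exists_antilipschitzWith hker
  have hKsq : (0 : ℝ) < (K : ℝ) ^ 2 := pow_pos (NNReal.coe_pos.2 hK) 2
  refine ⟨((K : ℝ) ^ 2)⁻¹, ‖T‖ ^ 2, inv_pos.2 hKsq, fun f ↦ ?_⟩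
  have hlower : ‖f‖ ≤ K * ‖T f‖ := by simpa using hanti.le_mul_dist f 0
  rw [← hT, inv_mul_le_iff₀ hKsq, ← mul_pow, ← mul_pow]
  exact ⟨by gcongr, by gcongr; exact T.le_opNorm f⟩

end FrameBounds

section Weaving

lemma range_weaving {α ι : Type*} (φ ψ : ι → α) (J : Set ι) :
    Set.range (weaving φ ψ J) = φ '' J ∪ ψ '' Jᶜ := by
  classical exact J.range_piecewise φ ψ

variable {E ι : Type*} [NormedAddCommGroup E] [InnerProductSpace ℂ E]

lemma isFrameWith_iff [Fintype ι] {φ : ι → E} {A B : ℝ} :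
    IsFrameWith φ A B ↔ 0 < A ∧ A ≤ B ∧ ∀ f : E, A * ‖f‖ ^ 2 ≤ ∑ i, ‖⟪f, φ i⟫‖ ^ 2 ∧
      ∑ i, ‖⟪f, φ i⟫‖ ^ 2 ≤ B * ‖f‖ ^ 2 := by
  simp only [IsFrameWith, tsum_fintype, (hasSum_fintype _).summable, true_and]

lemma IsFrameWith.mono {φ : ι → E} {A A' B B' : ℝ} (h : IsFrameWith φ A B) (hA' : 0 < A')
    (hA : A' ≤ A) (hB : B ≤ B') : IsFrameWith φ A' B' := by
  obtain ⟨-, hAB, hφ⟩ := h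
  refine ⟨hA', hA.trans (hAB.trans hB), fun f ↦ ⟨(hφ f).1, ?_, ?_⟩⟩
  · exact (mul_le_mul_of_nonneg_right hA (sq_nonneg _)).trans (hφ f).2.1
  · exact (hφ f).2.2.trans (mul_le_mul_of_nonneg_right hB (sq_nonneg _))

lemma isFrame_of_span_eq_top [Finite ι] {φ : ι → E}
    (hφ : Submodule.span ℂ (Set.range φ) = ⊤) : IsFrame φ := by
  have := Fintype.ofFinite ι
  obtain ⟨A, B, hA, hAB⟩ := exists_frame_bounds_of_span_eq_top hφ
  refine ⟨A, max A B, isFrameWith_iff.2 ⟨hA, le_max_left A B, fun f ↦ ⟨(hAB f).1, ?_⟩⟩⟩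
  exact (hAB f).2.trans (mul_le_mul_of_nonneg_right (le_max_right A B) (sq_nonneg _))

lemma woven_of_forall_isFrame [Finite ι] {φ ψ : ι → E}
    (h : ∀ J : Set ι, IsFrame (weaving φ ψ J)) : Woven φ ψ := by
  choose A B hAB using h
  obtain ⟨J₁, hJ₁⟩ := Finite.exists_min A
  obtain ⟨J₂, hJ₂⟩ := Finite.exists_max B
  exact ⟨A J₁, B J₂, fun J ↦ (hAB J).mono (hAB J₁).1 (hJ₁ J) (hJ₂ J)⟩

lemma woven_of_forall_sup_span_eq_top [Finite ι] {φ ψ : ι → E}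
    (h : ∀ J : Set ι, Submodule.span ℂ (φ '' J) ⊔ Submodule.span ℂ (ψ '' Jᶜ) = ⊤) :
    Woven φ ψ :=
  woven_of_forall_isFrame fun J ↦ isFrame_of_span_eq_top <| by
    rw [range_weaving, Submodule.span_union, h J]

theorem exists_equalNorm_parseval_woven_general [Nontrivial E] [Finite ι] (φ : ι → E)
    (hφ : Submodule.span ℂ (Set.range φ) = ⊤) :
    ∃ ψ : ι → E,
      (∃ c : ℝ, 0 < c ∧ ∀ i, ‖ψ i‖ = c) ∧
      IsFrameWith ψ 1 1 ∧
      Woven φ ψ := by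
  classical
  have := Fintype.ofFinite ι
  have : FiniteDimensional ℂ E := .of_fg_top (hφ ▸ Submodule.fg_span (Set.finite_range φ))
  have hcard : Module.finrank ℂ E ≤ Fintype.card ι := by
    rw [← finrank_top ℂ E, ← hφ]
    exact finrank_range_le_card φ
  obtain ⟨η, ⟨c, hc, hnorm⟩, hparseval, hspark⟩ := exists_equalNorm_parseval_isFullSpark hcard
  obtain ⟨L, hL⟩ := exists_linearIsometryEquiv_forall_sup_map_eq_top fun J : Finset ι ↦
    hspark.finrank_le_finrank_span_add_finrank_span_compl hφ J
  refine ⟨L ∘ η, ⟨c, hc, fun i ↦ (L.norm_map _).trans (hnorm i)⟩,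
    isFrameWith_iff.2 ⟨one_pos, le_rfl, fun f ↦ ?_⟩, woven_of_forall_sup_span_eq_top fun J ↦ ?_⟩
  · have hinner (i) : ⟪f, L (η i)⟫ = ⟪L.symm f, η i⟫ := (L.symm.inner_map_eq_flip f (η i)).symm
    simp [hinner, hparseval]
  · have hLJ := hL J.toFinset
    rw [Submodule.map_span] at hLJ
    rw [Set.image_comp]
    simpa using hLJ

end Weaving

/-- Let `m, n` be relatively prime, and let `φ` be an `ε`-nearly
equal-norm, `ε`-nearly Parseval frame of `n` vectors for an `m`-dimensional Hilbert
space `H`, with lower frame bound `Aφ`, where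
`0 < ε < min (1/2) (8 α √Aφ / (4 √m + 27 m² n (n-1)⁸))` for some `α < 1`.
Then there exists an equal-norm Parseval frame `ψ` such that `φ` and `ψ` are woven. -/
theorem exists_equalNorm_parseval_woven [FiniteDimensional ℂ H]
    (m n : ℕ) (hdim : Module.finrank ℂ H = m) (hmn : Nat.Coprime m n)
    (φ : Fin n → H) (Aφ : ℝ) (hAφ : 0 < Aφ)
    (hlow : ∀ f : H, Aφ * ‖f‖ ^ 2 ≤ ∑ i, ‖⟪f, φ i⟫‖ ^ 2)
    (ε : ℝ) (α : ℝ) (hα : α < 1)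
    (hε : 0 < ε ∧ ε < min (1 / 2)
      (8 * α * Real.sqrt Aφ /
        (4 * Real.sqrt m + 27 * (m : ℝ) ^ 2 * n * ((n : ℝ) - 1) ^ 8)))
    (hnearNorm : ∃ c : ℝ, 0 < c ∧ ∀ i : Fin n,
      (1 - ε) * c ≤ ‖φ i‖ ∧ ‖φ i‖ ≤ (1 + ε) * c)
    (hnearParseval : ∀ f : H,
      (1 - ε) * ‖f‖ ^ 2 ≤ ∑ i, ‖⟪f, φ i⟫‖ ^ 2 ∧
      ∑ i, ‖⟪f, φ i⟫‖ ^ 2 ≤ (1 + ε) * ‖f‖ ^ 2) :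
    ∃ ψ : Fin n → H,
      (∃ c : ℝ, 0 < c ∧ ∀ i : Fin n, ‖ψ i‖ = c) ∧
      IsFrameWith ψ 1 1 ∧
      Woven φ ψ := by
  have hspan : Submodule.span ℂ (Set.range φ) = ⊤ := span_range_eq_top_of_lower_bound hAφ hlow
  have : Nontrivial H := by
    by_contra! hH
    obtain rfl : m = 0 := hdim.symm.trans Module.finrank_zero_of_subsingleton
    obtain rfl : n = 1 := by simpa using hmn
    obtain ⟨c, hc, hφc⟩ := hnearNorm
    have hlow₀ : (1 - ε) * c ≤ 0 := by simpa [Subsingleton.elim (φ 0) 0] using (hφc 0).1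
    have hε' : ε < 1 / 2 := hε.2.trans_le (min_le_left _ _)
    nlinarith
  exact exists_equalNorm_parseval_woven_general φ hspan
end
end
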